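/- For all integers d with 121 ≤ d ≤ 124 or d ≥ 249, and all integers n ≥ 1 such that n ≠ d + 7 whenever d ≡ 1 (mod 4), one has q_d^{(4)}(n) ≥ Q_d^{(4,-)}(n). -/

import Mathlib

/-- `q_d^{(a)}(n)`: the number of partitions of `n` into parts of size at least `a`
such that successive parts differ by at least `d`. -/
noncomputable def gapCount (d a n : ℕ) : ℕ :=
  Nat.card {p : n.Partition //
    (∀ x ∈ p.parts, a ≤ x) ∧
    List.Chain' (fun x y => x + d ≤ y) (p.parts.sort (· ≤ ·))}

/-- `Q_d^{(a)}(n)`: the number of partitions of `n` into parts congruent to `a` or `-a`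
modulo `d + 3`. -/
noncomputable def congCount (d a n : ℕ) : ℕ :=
  Nat.card {p : n.Partition //
    ∀ x ∈ p.parts, x ≡ a [MOD d + 3] ∨ x + a ≡ 0 [MOD d + 3]}

/-- `Q_d^{(a,-)}(n)`: as `congCount`, but no part equals `d + 3 - a`. -/
noncomputable def congMinusCount (d a n : ℕ) : ℕ :=
  Nat.card {p : n.Partition //
    (∀ x ∈ p.parts, x ≡ a [MOD d + 3] ∨ x + a ≡ 0 [MOD d + 3]) ∧
    ∀ x ∈ p.parts, x ≠ d + 3 - a}

/-- `Q_d^{(a,-,-)}(n)`: as `congCount`, but no part equals `a` or `d + 3 - a`. -/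
noncomputable def congMinusMinusCount (d a n : ℕ) : ℕ :=
  Nat.card {p : n.Partition //
    (∀ x ∈ p.parts, x ≡ a [MOD d + 3] ∨ x + a ≡ 0 [MOD d + 3]) ∧
    (∀ x ∈ p.parts, x ≠ a) ∧ ∀ x ∈ p.parts, x ≠ d + 3 - a}

/-- `ρ(R; n)`: the number of partitions of `n` all of whose parts lie in `R`. -/
noncomputable def rhoCount (R : Set ℕ) (n : ℕ) : ℕ :=
  Nat.card {p : n.Partition // ∀ x ∈ p.parts, x ∈ R}

/-- `h_n^{(a)}`: the least nonnegative residue of `-n` modulo `a`,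
so that `n + negRes n a = a * ⌈n/a⌉`. -/
def negRes (n a : ℕ) : ℕ := (a - n % a) % a

/-- `⌈d/a⌉` for natural numbers. -/
def cdiv (d a : ℕ) : ℕ := (d + a - 1) / a

/-!
Apart from copies of `a`, a partition counted by `Q_d^{(a,-)}(n)` consists of parts within `a` of
multiples `j (d + 3)`. Recording `j` for each such part, in one colour for parts `j (d + 3) + a` and
in another for parts `j (d + 3) - a`, determines the partition and gives a multiset of weights
`1, 2, 2, 3, 3, …` of total at most `J`, where `J` is about `2 n / (2 d + 6 - a)`. By the product
formula for the generating function there are at most `exp (π ^ 2 / 3 * s + J / s)` such multisets,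
for every `s > 0`; with `s = √J / 2` this is less than `40 ^ √J`.

For the other count, choose about `√J` parts from the smallest upwards, letting each of them exceed
its least admissible value by `0, …, 120` and giving the remainder to the last one. This produces
`121 ^ k` partitions counted by `q_d^{(a)}(n)`, with `k` close to `√J`, which is enough for `k ≥ 7`.
For smaller `k` the multisets of weights are counted exactly, and below that `Q_d^{(a,-)}(n) ≤ 1`.
-/

open Function Finset

section GapPartitions

/-- The ascending lists of sum `n` whose entries are at least `s` and increase by at least `d` from
one to the next; these are the partitions counted by `gapCount d s n`. -/
def gapLists (d s n : ℕ) : Set (List ℕ) :=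
  {l | l.sum = n ∧ (∀ x ∈ l, s ≤ x) ∧ l.IsChain fun x y => x + d ≤ y}

theorem cons_mem_gapLists {d s x n : ℕ} {l : List ℕ} (hsx : s ≤ x) (hxn : x ≤ n)
    (hl : l ∈ gapLists d (x + d) (n - x)) : x :: l ∈ gapLists d s n := by
  obtain ⟨hsum, hmin, hchain⟩ := hl
  refine ⟨?_, ?_, hchain.cons fun y hy => hmin y (List.mem_of_mem_head? hy)⟩
  · rw [List.sum_cons, hsum, Nat.add_sub_cancel' hxn]
  · rintro y (_ | ⟨_, hy⟩)
    · exact hsx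
    · exact hsx.trans ((Nat.le_add_right x d).trans (hmin y hy))

-- Each of the first `k` entries may exceed its least admissible value by any amount up to `B`;
-- the last of the `k + 1` entries absorbs the rest.
theorem pow_le_encard_gapLists {d B k s n : ℕ}
    (h : 2 * (k + 1) * s + k * (k + 1) * (B + d) + 2 * k * B ≤ 2 * n) :
    ((B + 1) ^ k : ℕ) ≤ (gapLists d s n).encard := by
  induction k generalizing s n with
  | zero =>
    have hn : [n] ∈ gapLists d s n := ⟨by simp, by simpa using by omega, by simp⟩
    simpa using Set.nonempty_of_mem hn
  | succ k ih =>
    have hsn (g : Fin (B + 1)) : s + g ≤ n := by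
      nlinarith [g.is_le, Nat.zero_le (k * (k + 1) * (B + d)), Nat.zero_le (k * s),
        Nat.zero_le (k * d), Nat.zero_le (k * B)]
    have hrest (g : Fin (B + 1)) :
        ((B + 1) ^ k : ℕ) ≤ (gapLists d (s + g + d) (n - (s + g))).encard := by
      obtain ⟨m, hm⟩ := Nat.exists_eq_add_of_le (hsn g)
      refine ih ?_
      rw [hm, Nat.add_sub_cancel_left]
      nlinarith [g.is_le]
    have hdisj : Pairwise (Disjoint on fun g : Fin (B + 1) =>
        List.cons (s + g) '' gapLists d (s + g + d) (n - (s + g))) := by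
      intro g g' hgg'
      simp only [onFun, Set.disjoint_left, Set.mem_image]
      rintro _ ⟨l, _, rfl⟩ ⟨l', _, heq⟩
      exact hgg' (Fin.ext (Nat.add_left_cancel (List.cons.inj heq).1.symm))
    calc (((B + 1) ^ (k + 1) : ℕ) : ℕ∞) = ∑ _ : Fin (B + 1), (((B + 1) ^ k : ℕ) : ℕ∞) := by
          simp [pow_succ']
      _ ≤ ∑ g : Fin (B + 1),
            (List.cons (s + g) '' gapLists d (s + g + d) (n - (s + g))).encard :=
          sum_le_sum fun g _ => by
            rw [(List.cons_injective.injOn).encard_image]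
            exact hrest g
      _ = (⋃ g : Fin (B + 1),
            List.cons (s + g) '' gapLists d (s + g + d) (n - (s + g))).encard := by
          rw [Set.encard_iUnion_of_finite hdisj, finsum_eq_sum_of_fintype]
      _ ≤ (gapLists d s n).encard := Set.encard_le_encard <| Set.iUnion_subset fun g => by
          rintro _ ⟨l, hl, rfl⟩
          exact cons_mem_gapLists (Nat.le_add_right s g) (hsn g) hl

theorem sort_coe_of_isChain_gap {d : ℕ} {l : List ℕ} (h : l.IsChain fun x y => x + d ≤ y) :
    (l : Multiset ℕ).sort (· ≤ ·) = l := by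
  have hle : l.IsChain (· ≤ ·) := h.imp fun x _ hxy => (Nat.le_add_right x d).trans hxy
  rw [Multiset.coe_sort]
  exact List.mergeSort_eq_self _ hle.pairwise

theorem encard_gapLists_le_gapCount {d a n : ℕ} (ha : 0 < a) :
    (gapLists d a n).encard ≤ gapCount d a n := by
  let toPartition (l : gapLists d a n) : {p : n.Partition //
      (∀ x ∈ p.parts, a ≤ x) ∧ (p.parts.sort (· ≤ ·)).IsChain fun x y => x + d ≤ y} :=
    ⟨⟨(l.1 : Multiset ℕ), fun hx => ha.trans_le (l.2.2.1 _ hx), l.2.1⟩,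
      l.2.2.1, by rw [sort_coe_of_isChain_gap l.2.2.2]; exact l.2.2.2⟩
  have hinj : Injective toPartition := fun l l' hll' => Subtype.ext <| by
    have hparts : (l.1 : Multiset ℕ) = l'.1 := congrArg (fun p => p.1.parts) hll'
    rw [← sort_coe_of_isChain_gap l.2.2.2, hparts, sort_coe_of_isChain_gap l'.2.2.2]
  exact (ENat.card_le_card_of_injective hinj).trans_eq (ENat.card_eq_coe_natCard _)

theorem pow_le_gapCount {d a B k n : ℕ} (ha : 0 < a)
    (h : 2 * (k + 1) * a + k * (k + 1) * (B + d) + 2 * k * B ≤ 2 * n) :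
    (B + 1) ^ k ≤ gapCount d a n :=
  ENat.natCast_le_natCast.1 ((pow_le_encard_gapLists h).trans (encard_gapLists_le_gapCount ha))

end GapPartitions

section WeightCount

/-- The number of ways to choose multiplicities for the entries of a list of positive weights so
that the total weight is at most `X`. -/
def weightCount : List ℕ → ℕ → ℕ
  | [], _ => 1
  | w :: l, X => ∑ i ∈ range (X / w + 1), weightCount l (X - i * w)

theorem encard_multiset_le_weightCount {α : Type*} (w : α → ℕ) (L : List α)
    (hL : ∀ s ∈ L, 0 < w s) (X : ℕ) :
    {m : Multiset α | (∀ x ∈ m, x ∈ L) ∧ (m.map w).sum ≤ X}.encard ≤ weightCount (L.map w) X := by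
  classical
  induction L generalizing X with
  | nil =>
    simp only [List.map_nil, weightCount, Nat.cast_one, Set.encard_le_one_iff]
    rintro m m' ⟨hm, _⟩ ⟨hm', _⟩
    rw [Multiset.eq_zero_of_forall_notMem fun x hx => List.not_mem_nil (hm x hx),
      Multiset.eq_zero_of_forall_notMem fun x hx => List.not_mem_nil (hm' x hx)]
  | cons s L ih =>
    have hs : 0 < w s := hL s List.mem_cons_self
    set S : ℕ → Set (Multiset α) := fun Y => {m | (∀ x ∈ m, x ∈ L) ∧ (m.map w).sum ≤ Y}
    have hcover : {m : Multiset α | (∀ x ∈ m, x ∈ s :: L) ∧ (m.map w).sum ≤ X} ⊆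
        ⋃ i ∈ range (X / w s + 1), (Multiset.replicate i s + ·) '' S (X - i * w s) := by
      rintro m ⟨hm, hsum⟩
      have hsplit : Multiset.replicate (m.count s) s + m.filter (· ≠ s) = m := by
        rw [← Multiset.filter_eq', Multiset.filter_add_not]
      have hweight : m.count s * w s + ((m.filter (· ≠ s)).map w).sum ≤ X := by
        rw [← hsplit] at hsum
        simpa using hsum
      simp only [Set.mem_iUnion, mem_range, Nat.lt_succ_iff]
      refine ⟨m.count s, (Nat.le_div_iff_mul_le hs).2 (by omega),
        m.filter (· ≠ s), ⟨fun x hx => ?_, by omega⟩, hsplit⟩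
      rw [Multiset.mem_filter] at hx
      exact (List.mem_cons.1 (hm x hx.1)).resolve_left hx.2
    calc _ ≤ _ := Set.encard_le_encard hcover
      _ ≤ ∑ i ∈ range (X / w s + 1),
            ((Multiset.replicate i s + ·) '' S (X - i * w s)).encard := set_encard_biUnion_le _ _
      _ ≤ ∑ i ∈ range (X / w s + 1), (weightCount (L.map w) (X - i * w s) : ℕ∞) :=
          sum_le_sum fun i _ => (Set.encard_image_le _ _).trans
            (ih (fun x hx => hL x (List.mem_cons_of_mem s hx)) _)
      _ = weightCount ((s :: L).map w) X := by simp [weightCount]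

theorem weightCount_mul_pow_le {l : List ℕ} (hl : ∀ w ∈ l, 0 < w) {t : ℝ} (ht0 : 0 < t)
    (ht1 : t < 1) (X : ℕ) :
    weightCount l X * t ^ X ≤ (l.map fun w => (1 - t ^ w)⁻¹).prod := by
  induction l generalizing X with
  | nil => simpa [weightCount] using pow_le_one₀ ht0.le ht1.le
  | cons w l ih =>
    have hw : 0 < w := hl w List.mem_cons_self
    have ih' (Y : ℕ) := ih (fun x hx => hl x (List.mem_cons_of_mem w hx)) Y
    rw [List.map_cons, List.prod_cons]
    set P := (l.map fun w => (1 - t ^ w)⁻¹).prod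
    have hP : 0 ≤ P := le_trans (by positivity) (ih' 0)
    have htw : t ^ w < 1 := pow_lt_one₀ ht0.le ht1 hw.ne'
    calc (weightCount (w :: l) X : ℝ) * t ^ X
        = ∑ i ∈ range (X / w + 1), (t ^ w) ^ i * (weightCount l (X - i * w) * t ^ (X - i * w)) := by
          rw [weightCount, Nat.cast_sum, sum_mul]
          refine sum_congr rfl fun i hi => ?_
          have hiX : i * w ≤ X := (Nat.le_div_iff_mul_le hw).1 (by simpa [Nat.lt_succ_iff] using hi)
          rw [mul_left_comm, ← pow_mul, mul_comm w, ← pow_add, Nat.add_sub_cancel' hiX]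
      _ ≤ ∑ i ∈ range (X / w + 1), (t ^ w) ^ i * P := by
          gcongr
          exact ih' _
      _ ≤ (1 - t ^ w)⁻¹ * P := by
          rw [← sum_mul]
          gcongr
          exact sum_le_hasSum _ (fun _ _ => by positivity)
            (hasSum_geometric_of_lt_one (by positivity) htw)

end WeightCount

section ExponentialBound

variable {t : ℝ}

theorem pow_div_one_sub_pow_le (ht0 : 0 < t) (ht1 : t < 1) (k : ℕ) :
    t ^ (k + 1) / (1 - t ^ (k + 1)) ≤ t / (1 - t) / (k + 1) := by
  have hpow : t ^ (k + 1) < 1 := pow_lt_one₀ ht0.le ht1 k.succ_ne_zero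
  have hterms : (k + 1) * t ^ k ≤ ∑ i ∈ range (k + 1), t ^ i := by
    simpa using card_nsmul_le_sum (range (k + 1)) (t ^ ·) (t ^ k) fun i hi =>
      pow_le_pow_of_le_one ht0.le ht1.le (by simpa [Nat.lt_succ_iff] using hi)
  have hgeom : (k + 1) * t ^ k * (1 - t) ≤ 1 - t ^ (k + 1) := by
    rw [← geom_sum_mul_neg]
    exact mul_le_mul_of_nonneg_right hterms (sub_nonneg.2 ht1.le)
  rw [div_div, div_le_div_iff₀ (sub_pos.2 hpow) (mul_pos (sub_pos.2 ht1) k.cast_add_one_pos)]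
  calc t ^ (k + 1) * ((1 - t) * (k + 1)) = t * ((k + 1) * t ^ k * (1 - t)) := by ring
    _ ≤ t * (1 - t ^ (k + 1)) := by gcongr

theorem sum_pow_le_div_one_sub (ht0 : 0 < t) (ht1 : t < 1) {s : Finset ℕ} (hs : ∀ j ∈ s, 0 < j) :
    ∑ j ∈ s, t ^ j ≤ t / (1 - t) := by
  have h0 : 0 ∉ s := fun h => (hs 0 h).false
  have hle : ∑ j ∈ insert 0 s, t ^ j ≤ (1 - t)⁻¹ :=
    sum_le_hasSum _ (fun _ _ => by positivity) (hasSum_geometric_of_lt_one ht0.le ht1)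
  rw [sum_insert h0, pow_zero] at hle
  have hsub : t / (1 - t) = (1 - t)⁻¹ - 1 := by
    field_simp [(sub_pos.2 ht1).ne']
    ring
  linarith

-- Expand each `-log (1 - t ^ j)` as `∑ t ^ (j k) / k`, exchange the sums, and compare with
-- `∑ 1 / k ^ 2 = π ^ 2 / 6`.
theorem prod_inv_one_sub_pow_le_exp (ht0 : 0 < t) (ht1 : t < 1) {s : Finset ℕ}
    (hs : ∀ j ∈ s, 0 < j) :
    ∏ j ∈ s, (1 - t ^ j)⁻¹ ≤ Real.exp (Real.pi ^ 2 / 6 * (t / (1 - t))) := by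
  have hpow {j : ℕ} (hj : j ∈ s) : t ^ j < 1 := pow_lt_one₀ ht0.le ht1 (hs j hj).ne'
  have hexp : ∏ j ∈ s, (1 - t ^ j)⁻¹ = Real.exp (∑ j ∈ s, -Real.log (1 - t ^ j)) := by
    rw [Real.exp_sum]
    exact prod_congr rfl fun j hj => by rw [Real.exp_neg, Real.exp_log (sub_pos.2 (hpow hj))]
  have hlog : HasSum (fun k : ℕ => ∑ j ∈ s, (t ^ j) ^ (k + 1) / ((k : ℝ) + 1))
      (∑ j ∈ s, -Real.log (1 - t ^ j)) :=
    hasSum_sum fun j hj => Real.hasSum_pow_div_log_of_abs_lt_one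
      (by rw [abs_of_pos (by positivity)]; exact hpow hj)
  have hzeta : HasSum (fun k : ℕ => 1 / ((k : ℝ) + 1) ^ 2 * (t / (1 - t)))
      (Real.pi ^ 2 / 6 * (t / (1 - t))) :=
    HasSum.mul_right _ (by simpa using (hasSum_nat_add_iff' 1).2 hasSum_zeta_two)
  rw [hexp, Real.exp_le_exp]
  refine hasSum_le (fun k => ?_) hlog hzeta
  calc ∑ j ∈ s, (t ^ j) ^ (k + 1) / ((k : ℝ) + 1)
      = (∑ j ∈ s, (t ^ (k + 1)) ^ j) / ((k : ℝ) + 1) := by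
        rw [sum_div]
        simp only [pow_right_comm]
    _ ≤ t ^ (k + 1) / (1 - t ^ (k + 1)) / ((k : ℝ) + 1) := by
        gcongr
        exact sum_pow_le_div_one_sub (by positivity)
          (pow_lt_one₀ ht0.le ht1 k.succ_ne_zero) hs
    _ ≤ t / (1 - t) / ((k : ℝ) + 1) / ((k : ℝ) + 1) :=
        div_le_div_of_nonneg_right (pow_div_one_sub_pow_le ht0 ht1 k) (by positivity)
    _ = 1 / ((k : ℝ) + 1) ^ 2 * (t / (1 - t)) := by
        rw [div_div _ ((k : ℝ) + 1), ← pow_two, div_eq_mul_one_div, mul_comm]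

end ExponentialBound

section Tabulation

/-- One step of the tabulation of `weightCount`: from the values for a list of weights at
`X - 1, …, 0`, in this order, the values for the list enlarged by `w`. -/
def addWeight (w : ℕ) (row : List ℕ) : List ℕ :=
  row.foldr (fun c acc => (c + acc.getD (w - 1) 0) :: acc) []

theorem weightCount_cons {w : ℕ} (hw : 0 < w) (l : List ℕ) (X : ℕ) :
    weightCount (w :: l) X =
      weightCount l X + if w ≤ X then weightCount (w :: l) (X - w) else 0 := by
  rw [weightCount, sum_range_succ', add_comm, Nat.zero_mul, Nat.sub_zero]
  split_ifs with hX
  · rw [weightCount, Nat.div_eq_sub_div hw hX]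
    simp only [Nat.succ_mul, Nat.add_comm _ w, Nat.sub_sub]
  · rw [Nat.div_eq_of_lt (not_le.1 hX), sum_range_zero]

theorem addWeight_map_weightCount {w : ℕ} (hw : 0 < w) (l : List ℕ) (X : ℕ) :
    addWeight w ((List.range X).reverse.map (weightCount l)) =
      (List.range X).reverse.map (weightCount (w :: l)) := by
  induction X with
  | zero => rfl
  | succ X ih =>
    have hget : ((List.range X).reverse.map (weightCount (w :: l))).getD (w - 1) 0 =
        if w ≤ X then weightCount (w :: l) (X - w) else 0 := by
      split_ifs with hX
      · rw [List.getD_eq_getElem _ _ (by simp; omega)]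
        simp only [List.getElem_map, List.getElem_reverse, List.getElem_range, List.length_range]
        congr 1
        omega
      · exact List.getD_eq_default _ _ (by simp; omega)
    rw [addWeight] at ih ⊢
    rw [List.range_succ, List.reverse_append, List.reverse_singleton, List.singleton_append,
      List.map_cons, List.foldr_cons, ih, hget, ← weightCount_cons hw, List.map_cons]

theorem foldr_addWeight {l : List ℕ} (hl : ∀ w ∈ l, 0 < w) (X : ℕ) :
    l.foldr addWeight (List.replicate X 1) = (List.range X).reverse.map (weightCount l) := by
  induction l with
  | nil => exact (List.eq_replicate_iff.2 ⟨by simp, by simp [weightCount]⟩).symm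
  | cons w l ih =>
    rw [List.foldr_cons, ih fun x hx => hl x (List.mem_cons_of_mem w hx),
      addWeight_map_weightCount (hl w List.mem_cons_self)]

theorem weightCount_eq_headD {l : List ℕ} (hl : ∀ w ∈ l, 0 < w) (X : ℕ) :
    weightCount l X = (l.foldr addWeight (List.replicate (X + 1) 1)).headD 0 := by
  rw [foldr_addWeight hl, List.range_succ, List.reverse_append, List.reverse_singleton,
    List.singleton_append, List.map_cons, List.headD_cons]

end Tabulation

section TwoColourWeights

/-- The weights `1, …, J` together with `2, …, J + 1`. These are the multiples of `d + 3` nearest to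
the parts congruent to `a` and to `-a` modulo `d + 3`, in units of `d + 3`; a second weight `1` is
missing because the parts `a` and `d + 3 - a` are left out. -/
def twoColourWeights (J : ℕ) : List ℕ :=
  List.range' 1 J ++ List.range' 2 J

theorem pos_of_mem_twoColourWeights {J w : ℕ} (hw : w ∈ twoColourWeights J) : 0 < w := by
  simp only [twoColourWeights, List.mem_append, List.mem_range'_1] at hw
  omega

theorem weightCount_twoColourWeights_le_exp (J X : ℕ) {s : ℝ} (hs : 0 < s) :
    (weightCount (twoColourWeights J) X : ℝ) ≤ Real.exp (Real.pi ^ 2 / 3 * s + X / s) := by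
  set t := s / (s + 1) with ht
  have ht0 : 0 < t := by positivity
  have ht1 : t < 1 := (div_lt_one (by positivity)).2 (by linarith)
  have hratio : t / (1 - t) = s := by
    rw [ht]
    field_simp
    ring
  have hfactor {b : ℕ} (hb : 0 < b) : ((List.range' b J).map fun w => (1 - t ^ w)⁻¹).prod ≤
      Real.exp (Real.pi ^ 2 / 6 * s) := by
    rw [← List.prod_toFinset _ List.nodup_range', ← hratio]
    refine prod_inv_one_sub_pow_le_exp ht0 ht1 fun j hj => ?_
    rw [List.mem_toFinset, List.mem_range'_1] at hj
    exact hb.trans_le hj.1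
  have hprod : weightCount (twoColourWeights J) X * t ^ X ≤ Real.exp (Real.pi ^ 2 / 3 * s) :=
    calc _ ≤ ((twoColourWeights J).map fun w => (1 - t ^ w)⁻¹).prod :=
          weightCount_mul_pow_le (fun _ => pos_of_mem_twoColourWeights) ht0 ht1 X
      _ ≤ Real.exp (Real.pi ^ 2 / 6 * s) * Real.exp (Real.pi ^ 2 / 6 * s) := by
          rw [twoColourWeights, List.map_append, List.prod_append]
          refine mul_le_mul (hfactor one_pos) (hfactor two_pos) ?_ (Real.exp_pos _).le
          refine List.prod_nonneg fun x hx => ?_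
          obtain ⟨w, -, rfl⟩ := List.mem_map.1 hx
          exact inv_nonneg.2 (sub_nonneg.2 (pow_le_one₀ ht0.le ht1.le))
      _ = Real.exp (Real.pi ^ 2 / 3 * s) := by
          rw [← Real.exp_add]
          ring_nf
  have hinv : t⁻¹ ^ X ≤ Real.exp (X / s) := by
    rw [div_eq_mul_inv, Real.exp_nat_mul]
    refine pow_le_pow_left₀ (by positivity) ?_ X
    calc t⁻¹ = s⁻¹ + 1 := by
          rw [ht]
          field_simp
          ring
      _ ≤ Real.exp s⁻¹ := Real.add_one_le_exp _
  calc (weightCount (twoColourWeights J) X : ℝ)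
      = weightCount (twoColourWeights J) X * t ^ X * t⁻¹ ^ X := by
        rw [inv_pow, mul_inv_cancel_right₀ (by positivity)]
    _ ≤ Real.exp (Real.pi ^ 2 / 3 * s) * Real.exp (X / s) := by gcongr
    _ = _ := (Real.exp_add _ _).symm

theorem exp_pi_sq_div_six_add_two_le_forty : Real.exp (Real.pi ^ 2 / 6 + 2) ≤ 40 := by
  have hpi : Real.pi ^ 2 / 6 + 2 ≤ (73 : ℕ) * (1 / 20) := by
    nlinarith [Real.pi_pos, Real.pi_lt_d4]
  refine (Real.exp_le_exp.2 hpi).trans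
    (le_of_pow_le_pow_left₀ (n := 20) (by norm_num) (by norm_num) ?_)
  calc Real.exp ((73 : ℕ) * (1 / 20)) ^ 20 = Real.exp 1 ^ 73 := by
        rw [← Real.exp_nat_mul, ← Real.exp_nat_mul]
        norm_num
    _ ≤ 2.7182818286 ^ 73 := by
        gcongr
        exact Real.exp_one_lt_d9.le
    _ ≤ 40 ^ 20 := by norm_num

theorem forty_pow_le {k : ℕ} (hk : 7 ≤ k) : 40 ^ (k + 2) ≤ 121 ^ k := by
  induction k, hk using Nat.le_induction with
  | base => norm_num
  | succ k _ ih =>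
    rw [pow_succ 121, Nat.succ_add, pow_succ]
    exact Nat.mul_le_mul ih (by norm_num)

-- As `X = k ^ 2 + 4 k + 2` is close to `(k + 2) ^ 2`, the choice `s = (k + 2) / 2` nearly minimizes
-- `π ^ 2 / 3 * s + X / s`.
theorem weightCount_twoColourWeights_le_of_seven_le {k : ℕ} (hk : 7 ≤ k) (J : ℕ) :
    weightCount (twoColourWeights J) (k * k + 4 * k + 2) ≤ 121 ^ k := by
  refine le_trans ?_ (forty_pow_le hk)
  have hs : (0 : ℝ) < ((k : ℝ) + 2) / 2 := by positivity
  have hexponent : Real.pi ^ 2 / 3 * (((k : ℝ) + 2) / 2) +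
      (k * k + 4 * k + 2 : ℕ) / (((k : ℝ) + 2) / 2) ≤ (k + 2 : ℕ) * (Real.pi ^ 2 / 6 + 2) := by
    have hX : ((k * k + 4 * k + 2 : ℕ) : ℝ) / (((k : ℝ) + 2) / 2) ≤ 2 * (k + 2) := by
      rw [div_le_iff₀ hs]
      push_cast
      linarith
    rw [Nat.cast_add k 2, Nat.cast_ofNat]
    linarith
  have hreal := (weightCount_twoColourWeights_le_exp J (k * k + 4 * k + 2) hs).trans
    (Real.exp_le_exp.2 hexponent)
  rw [Real.exp_nat_mul] at hreal
  exact_mod_cast hreal.trans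
    (pow_le_pow_left₀ (Real.exp_pos _).le exp_pi_sq_div_six_add_two_le_forty _)

theorem weightCount_twoColourWeights_one : weightCount (twoColourWeights 1) 1 = 2 := by decide

theorem weightCount_twoColourWeights_three : weightCount (twoColourWeights 3) 3 = 10 := by decide

theorem weightCount_twoColourWeights_le_of_lt_seven {k : ℕ} (hk1 : 1 ≤ k) (hk7 : k < 7) :
    weightCount (twoColourWeights (k * k + 4 * k + 2)) (k * k + 4 * k + 2) ≤ 121 ^ k := by
  rw [weightCount_eq_headD fun _ => pos_of_mem_twoColourWeights]
  interval_cases k <;> decide +kernel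

theorem weightCount_twoColourWeights_le {k : ℕ} (hk : 1 ≤ k) :
    weightCount (twoColourWeights (k * k + 4 * k + 2)) (k * k + 4 * k + 2) ≤ 121 ^ k :=
  (lt_or_ge k 7).elim (weightCount_twoColourWeights_le_of_lt_seven hk)
    fun h => weightCount_twoColourWeights_le_of_seven_le h _

end TwoColourWeights

section LargeCongParts

/-- The parts other than `a` itself that are allowed in the partitions counted by
`congMinusCount d a`. -/
def IsLargeCongPart (d a x : ℕ) : Prop :=
  (∃ j ≥ 1, x = j * (d + 3) + a) ∨ ∃ j ≥ 2, x + a = j * (d + 3)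

variable {d a x : ℕ}

theorem eq_or_isLargeCongPart (ha : 0 < a) (had : a < d + 3)
    (hcong : x ≡ a [MOD d + 3] ∨ x + a ≡ 0 [MOD d + 3]) (hx : x ≠ d + 3 - a) :
    x = a ∨ IsLargeCongPart d a x := by
  rcases hcong with h | h
  · have hmod : x % (d + 3) = a := Eq.trans h (Nat.mod_eq_of_lt had)
    have hdiv := Nat.div_add_mod' x (d + 3)
    rw [hmod] at hdiv
    rcases Nat.eq_zero_or_pos (x / (d + 3)) with h0 | h0
    · left
      simpa [h0] using hdiv.symm
    · exact Or.inr (Or.inl ⟨_, h0, hdiv.symm⟩)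
  · obtain ⟨j, hj⟩ := exists_eq_mul_left_of_dvd ((Nat.modEq_zero_iff_dvd).1 h)
    refine Or.inr (Or.inr ⟨j, ?_, hj⟩)
    rcases j with _ | _ | j <;> omega

theorem mul_add_add_div (had : 2 * a < d + 3) (j : ℕ) : (j * (d + 3) + a + a) / (d + 3) = j :=
  Nat.div_eq_of_lt_le (by omega) (by rw [Nat.succ_mul]; omega)

theorem isLargeCongPart_div (had : 2 * a < d + 3) (hx : IsLargeCongPart d a x) :
    (∃ j ≥ 1, x = j * (d + 3) + a ∧ (x + a) / (d + 3) = j) ∨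
      ∃ j ≥ 2, x + a = j * (d + 3) ∧ (x + a) / (d + 3) = j := by
  refine hx.imp ?_ ?_
  · rintro ⟨j, hj, rfl⟩
    exact ⟨j, hj, rfl, mul_add_add_div had j⟩
  · rintro ⟨j, hj, hx⟩
    exact ⟨j, hj, hx, by rw [hx, Nat.mul_div_cancel _ (by omega)]⟩

-- For `x = j (d + 3) - a` with `j ≥ 2` this is `2 a ≤ j a`.
theorem div_mul_le_two_mul (had : 2 * a < d + 3) (hx : IsLargeCongPart d a x) :
    (x + a) / (d + 3) * (2 * (d + 3) - a) ≤ 2 * x := by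
  rcases isLargeCongPart_div had hx with ⟨j, -, hx, hdiv⟩ | ⟨j, hj, hx, hdiv⟩ <;>
    rw [hdiv, Nat.mul_sub, Nat.mul_left_comm]
  · omega
  · have : 2 * a ≤ j * a := Nat.mul_le_mul_right a hj
    omega

theorem sum_map_div_mul_le_two_mul_sum (had : 2 * a < d + 3) {m : Multiset ℕ}
    (hm : ∀ x ∈ m, IsLargeCongPart d a x) :
    (m.map fun x => (x + a) / (d + 3)).sum * (2 * (d + 3) - a) ≤ 2 * m.sum := by
  rw [← Multiset.sum_map_mul_right, ← Multiset.map_id' m, Multiset.map_map,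
    ← Multiset.sum_map_mul_left]
  exact Multiset.sum_map_le_sum_map _ _ fun x hx => div_mul_le_two_mul had (hm x hx)

theorem IsLargeCongPart.eq_add_or_two_mul_le (hx : IsLargeCongPart d a x) :
    x = d + 3 + a ∨ 2 * (d + 3) ≤ x + a := by
  rcases hx with ⟨j, hj, rfl⟩ | ⟨j, hj, hx⟩
  · rcases hj.eq_or_lt with rfl | hj
    · exact Or.inl (by ring)
    · have := Nat.mul_le_mul_right (d + 3) hj
      exact Or.inr (by omega)
  · exact Or.inr (hx ▸ Nat.mul_le_mul_right (d + 3) hj)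

/-- The elements `x` of `IsLargeCongPart d a` with `x ≤ J (d + 3) + a`, followed by
`(J + 1) (d + 3) - a`, arranged so that their weights `(x + a) / (d + 3)` are
`twoColourWeights J`. -/
def largeCongParts (d a J : ℕ) : List ℕ :=
  (List.range' 1 J).map (fun j => j * (d + 3) + a) ++
    (List.range' 2 J).map fun j => j * (d + 3) - a

theorem map_largeCongParts (had : 2 * a < d + 3) (J : ℕ) :
    (largeCongParts d a J).map (fun x => (x + a) / (d + 3)) = twoColourWeights J := by
  rw [largeCongParts, twoColourWeights, List.map_append, List.map_map, List.map_map]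
  congr 1 <;> refine (List.map_congr_left fun j hj => ?_).trans (List.map_id _)
  · exact mul_add_add_div had j
  · have hle : 2 * (d + 3) ≤ j * (d + 3) :=
      Nat.mul_le_mul_right (d + 3) (List.mem_range'_1.1 hj).1
    rw [comp_apply, Nat.sub_add_cancel (by omega), Nat.mul_div_cancel _ (by omega), id_eq]

theorem mem_largeCongParts {J : ℕ} (had : 2 * a < d + 3) (hx : IsLargeCongPart d a x)
    (hJ : (x + a) / (d + 3) ≤ J) : x ∈ largeCongParts d a J := by
  rw [largeCongParts, List.mem_append, List.mem_map, List.mem_map]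
  simp only [List.mem_range'_1]
  rcases isLargeCongPart_div had hx with ⟨j, hj, hx, hdiv⟩ | ⟨j, hj, hx, hdiv⟩
  · exact Or.inl ⟨j, by omega, hx.symm⟩
  · exact Or.inr ⟨j, by omega, by omega⟩

theorem encard_multiset_isLargeCongPart_le_weightCount (had : 2 * a < d + 3) (J : ℕ) :
    {m : Multiset ℕ | (∀ x ∈ m, IsLargeCongPart d a x) ∧
      (m.map fun x => (x + a) / (d + 3)).sum ≤ J}.encard ≤ weightCount (twoColourWeights J) J := by
  rw [← map_largeCongParts had]
  refine (Set.encard_le_encard fun m hm => ?_).trans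
    (encard_multiset_le_weightCount _ _ (fun x hx => ?_) J)
  · exact ⟨fun x hx => mem_largeCongParts had (hm.1 x hx)
      ((Multiset.le_sum_of_mem (Multiset.mem_map_of_mem _ hx)).trans hm.2), hm.2⟩
  · refine pos_of_mem_twoColourWeights (J := J) ?_
    rw [← map_largeCongParts had]
    exact List.mem_map_of_mem hx

end LargeCongParts

section CongruentPartitions

theorem congMinusCount_le_card {d a n : ℕ} (ha : 0 < a) (had : a < d + 3) :
    congMinusCount d a n ≤
      Nat.card {p : n.Partition // ∀ x ∈ p.parts, x = a ∨ IsLargeCongPart d a x} :=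
  Nat.card_mono (Set.toFinite _) fun _ hp x hx =>
    eq_or_isLargeCongPart ha had (hp.1 x hx) (hp.2 x hx)

theorem partition_ext_of_filter_ne {a n : ℕ} (ha : 0 < a) {p q : n.Partition}
    (h : p.parts.filter (· ≠ a) = q.parts.filter (· ≠ a)) : p = q := by
  have hsplit (r : n.Partition) :
      Multiset.replicate (r.parts.count a) a + r.parts.filter (· ≠ a) = r.parts := by
    rw [← Multiset.filter_eq', Multiset.filter_add_not]
  have hsum (r : n.Partition) : r.parts.count a * a + (r.parts.filter (· ≠ a)).sum = n := by
    rw [← smul_eq_mul, ← Multiset.sum_replicate, ← Multiset.sum_add, hsplit, r.parts_sum]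
  have hcount : p.parts.count a = q.parts.count a :=
    Nat.eq_of_mul_eq_mul_right ha <| Nat.add_right_cancel <|
      (hsum p).trans ((hsum q).symm.trans (by rw [h]))
  exact Nat.Partition.ext (by rw [← hsplit p, ← hsplit q, hcount, h])

theorem congMinusCount_le_weightCount {d a n J : ℕ} (ha : 0 < a) (had : 2 * a < d + 3)
    (hJ : 2 * n < (J + 1) * (2 * (d + 3) - a)) :
    congMinusCount d a n ≤ weightCount (twoColourWeights J) J := by
  set S := {m : Multiset ℕ | (∀ x ∈ m, IsLargeCongPart d a x) ∧
    (m.map fun x => (x + a) / (d + 3)).sum ≤ J}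
  have hfilter (p : {p : n.Partition // ∀ x ∈ p.parts, x = a ∨ IsLargeCongPart d a x}) :
      p.1.parts.filter (· ≠ a) ∈ S := by
    set m := p.1.parts.filter (· ≠ a)
    have hlarge : ∀ x ∈ m, IsLargeCongPart d a x := fun x hx =>
      (p.2 x (Multiset.mem_of_mem_filter hx)).resolve_left (Multiset.mem_filter.1 hx).2
    have hm : m.sum ≤ n := by
      rw [← p.1.parts_sum, ← Multiset.filter_add_not (· ≠ a) p.1.parts, Multiset.sum_add]
      exact Nat.le_add_right _ _
    have hsum := (sum_map_div_mul_le_two_mul_sum had hlarge).trans (Nat.mul_le_mul_left 2 hm)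
    exact ⟨hlarge, Nat.lt_succ_iff.1 (Nat.lt_of_mul_lt_mul_right (hsum.trans_lt hJ))⟩
  have hinj : Injective fun p => (⟨_, hfilter p⟩ : S) := fun p q hpq =>
    Subtype.ext (partition_ext_of_filter_ne ha (congrArg Subtype.val hpq))
  rw [← ENat.natCast_le_natCast]
  calc (congMinusCount d a n : ℕ∞) ≤ _ :=
        ENat.natCast_le_natCast.2 (congMinusCount_le_card ha (by omega))
    _ = _ := (ENat.card_eq_coe_natCard _).symm
    _ ≤ S.encard := ENat.card_le_card_of_injective hinj
    _ ≤ weightCount (twoColourWeights J) J := encard_multiset_isLargeCongPart_le_weightCount had J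

theorem parts_eq_replicate_or_singleton {d a n : ℕ} (ha : 0 < a) (had : 3 * a ≤ d + 3)
    (hn : n < d + 3 + 2 * a) (p : n.Partition)
    (hp : ∀ x ∈ p.parts, x = a ∨ IsLargeCongPart d a x) :
    (a ∣ n ∧ p.parts = Multiset.replicate (n / a) a) ∨
      (n = d + 3 + a ∧ p.parts = {d + 3 + a}) := by
  have hpart : ∀ x ∈ p.parts, x = a ∨ x = d + 3 + a := fun x hx =>
    (hp x hx).imp_right fun h => h.eq_add_or_two_mul_le.resolve_right (by
      have := p.le_of_mem_parts hx
      omega)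
  have hsum := p.parts_sum
  by_cases hmem : d + 3 + a ∈ p.parts
  · right
    obtain ⟨m, hm⟩ := Multiset.exists_cons_of_mem hmem
    rw [hm, Multiset.sum_cons] at hsum
    have hm0 : m = 0 := Multiset.eq_zero_of_forall_notMem fun x hx => by
      have := Multiset.le_sum_of_mem hx
      have := hpart x (hm ▸ Multiset.mem_cons_of_mem hx)
      omega
    rw [hm0, Multiset.sum_zero] at hsum
    exact ⟨hsum.symm, by rw [hm, hm0, Multiset.cons_zero]⟩
  · left
    have hrep := Multiset.eq_replicate_of_mem fun x hx =>
      (hpart x hx).resolve_right fun h => hmem (h ▸ hx)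
    rw [hrep, Multiset.sum_replicate, smul_eq_mul] at hsum
    exact ⟨Dvd.intro_left _ hsum, hrep.trans (congrArg (Multiset.replicate · a)
      (Nat.div_eq_of_eq_mul_left ha hsum.symm).symm)⟩

theorem congMinusCount_le_one {d a n : ℕ} (ha : 0 < a) (had : 3 * a ≤ d + 3)
    (hn : n < d + 3 + 2 * a) (hne : a ∣ d + 3 → n ≠ d + 3 + a) : congMinusCount d a n ≤ 1 := by
  refine (congMinusCount_le_card ha (by omega)).trans ?_
  rw [Finite.card_le_one_iff_subsingleton]
  refine ⟨fun ⟨p, hp⟩ ⟨q, hq⟩ => Subtype.ext (Nat.Partition.ext ?_)⟩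
  have hexcl (hdvd : a ∣ n) : n ≠ d + 3 + a := fun h =>
    hne ((Nat.dvd_add_left dvd_rfl).1 (h ▸ hdvd)) h
  rcases parts_eq_replicate_or_singleton ha had hn p hp with ⟨hdvd, h⟩ | ⟨heq, h⟩ <;>
    rcases parts_eq_replicate_or_singleton ha had hn q hq with ⟨hdvd', h'⟩ | ⟨heq', h'⟩
  · exact h.trans h'.symm
  · exact absurd heq' (hexcl hdvd)
  · exact absurd heq (hexcl hdvd')
  · exact h.trans h'.symm

theorem congMinusCount_eq_zero {d a n : ℕ} (had : 2 * a < d + 3) (hn : 0 < n) (hna : n < a) :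
    congMinusCount d a n = 0 := by
  refine Nat.le_zero.1 ((congMinusCount_le_card (by omega) (by omega)).trans_eq ?_)
  have : IsEmpty {p : n.Partition // ∀ x ∈ p.parts, x = a ∨ IsLargeCongPart d a x} := by
    refine ⟨fun ⟨p, hp⟩ => ?_⟩
    obtain ⟨x, hx⟩ := Multiset.exists_mem_of_ne_zero (s := p.parts) fun h => hn.ne (by
      rw [← p.parts_sum, h, Multiset.sum_zero])
    have hxn := p.le_of_mem_parts hx
    have := (hp x hx).imp_right IsLargeCongPart.eq_add_or_two_mul_le
    omega
  exact Nat.card_of_isEmpty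

end CongruentPartitions

section Comparison

variable {d a n : ℕ}

theorem congMinusCount_le_gapCount_of_lt (ha : 0 < a) (had : 3 * a ≤ d + 3) (hn : 0 < n)
    (hnd : n < d + 3 + 2 * a) (hne : a ∣ d + 3 → n ≠ d + 3 + a) :
    congMinusCount d a n ≤ gapCount d a n := by
  rcases lt_or_ge n a with hna | hna
  · exact (congMinusCount_eq_zero (by omega) hn hna).trans_le (Nat.zero_le _)
  · exact (congMinusCount_le_one ha had hnd hne).trans
      (pow_le_gapCount (B := 0) (k := 0) ha (by omega))

theorem exists_sq_add_two_mul_mul_le {e N : ℕ} (he : 0 < e) (hN : 3 * e ≤ N) :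
    ∃ k ≥ 1, (k * k + 2 * k) * e ≤ N ∧ N < (k * k + 4 * k + 3) * e := by
  set X := N / e
  have hX : 3 ≤ X := (Nat.le_div_iff_mul_le he).2 hN
  obtain ⟨k, hk⟩ := Nat.exists_eq_add_of_le' (Nat.le_sqrt.2 (by omega) : 1 ≤ (X + 1).sqrt)
  have hlow : (k + 1) * (k + 1) ≤ X + 1 := hk ▸ Nat.sqrt_le _
  have hhigh : X + 1 < (k + 2) * (k + 2) := by
    have := Nat.lt_succ_sqrt (X + 1)
    rwa [hk] at this
  refine ⟨k, ?_, (Nat.le_div_iff_mul_le he).1 ?_, (Nat.div_lt_iff_lt_mul he).1 ?_⟩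
  · by_contra! h0
    interval_cases k
    omega
  · change _ ≤ X
    linarith
  · change X < _
    linarith

theorem congMinusCount_le_gapCount_of_four_mul_le (ha : 4 ≤ a) (hd : 3 * a + 109 ≤ d)
    (hn : 4 * (2 * (d + 3) - a) ≤ 2 * n) : congMinusCount d a n ≤ gapCount d a n := by
  obtain ⟨k, hk, hlow, hhigh⟩ :=
    exists_sq_add_two_mul_mul_le (e := 2 * (d + 3) - a) (N := 2 * n) (by omega) (by omega)
  calc congMinusCount d a n ≤ weightCount (twoColourWeights (k * k + 4 * k + 2)) _ :=
        congMinusCount_le_weightCount (by omega) (by omega) hhigh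
    _ ≤ (120 + 1) ^ k := weightCount_twoColourWeights_le hk
    _ ≤ gapCount d a n := pow_le_gapCount (by omega) ?_
  obtain ⟨c, rfl⟩ := Nat.exists_eq_add_of_le ha
  obtain ⟨t, rfl⟩ := Nat.exists_eq_add_of_le hd
  rcases hk.eq_or_lt with rfl | hk2
  · omega
  · obtain ⟨i, rfl⟩ := Nat.exists_eq_add_of_le hk2
    rw [show 2 * (3 * (4 + c) + 109 + t + 3) - (4 + c) = 244 + 5 * c + 2 * t by omega] at hlow
    refine le_trans ?_ hlow
    nlinarith [Nat.zero_le (c * i), Nat.zero_le (c * i ^ 2), Nat.zero_le (t * i)]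

theorem stmt2_general (ha : 4 ≤ a) (hd : 3 * a + 109 ≤ d) (hn : 1 ≤ n)
    (hne : a ∣ d + 3 → n ≠ d + 3 + a) : congMinusCount d a n ≤ gapCount d a n := by
  have ha0 : 0 < a := by omega
  rcases lt_or_ge n (d + 3 + 2 * a) with h1 | h1
  · exact congMinusCount_le_gapCount_of_lt ha0 (by omega) hn h1 hne
  rcases lt_or_ge (2 * n) (2 * (2 * (d + 3) - a)) with h2 | h2
  · calc congMinusCount d a n ≤ weightCount (twoColourWeights 1) 1 :=
          congMinusCount_le_weightCount ha0 (by omega) h2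
      _ = (1 + 1) ^ 1 := weightCount_twoColourWeights_one
      _ ≤ gapCount d a n := pow_le_gapCount ha0 (by omega)
  rcases lt_or_ge (2 * n) (4 * (2 * (d + 3) - a)) with h4 | h4
  · calc congMinusCount d a n ≤ weightCount (twoColourWeights 3) 3 :=
          congMinusCount_le_weightCount ha0 (by omega) h4
      _ = (9 + 1) ^ 1 := weightCount_twoColourWeights_three
      _ ≤ gapCount d a n := pow_le_gapCount ha0 (by omega)
  exact congMinusCount_le_gapCount_of_four_mul_le ha hd h4

end Comparison

theorem stmt2 (d n : ℕ) (hd : (121 ≤ d ∧ d ≤ 124) ∨ 249 ≤ d) (hn : 1 ≤ n)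
    (hne : d % 4 = 1 → n ≠ d + 7) :
    congMinusCount d 4 n ≤ gapCount d 4 n :=
  stmt2_general le_rfl (by omega) hn fun h => hne (by omega)
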